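/- Let F : ℝ^N \ {0} → ℝ^N \ {0} be a C²-diffeomorphism and let A ⊂ ℝ^N \ {0} be a bounded open set with Lipschitz boundary. If C ⊂ A is compact with Cap_Δ(C; A) = 0, then Cap_Δ(F(C); F(A)) = 0. -/

import Mathlib

open MeasureTheory Metric Set Filter

noncomputable section

abbrev E (N : ℕ) := EuclideanSpace ℝ (Fin N)

def lap {N : ℕ} (f : E N → ℝ) (x : E N) : ℝ :=
  ∑ i : Fin N, fderiv ℝ (fun y => fderiv ℝ f y (EuclideanSpace.single i 1)) x
    (EuclideanSpace.single i 1)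

def capD {N : ℕ} (U Z : Set (E N)) : ℝ :=
  sInf { c | ∃ φ : E N → ℝ, ContDiff ℝ (⊤ : ℕ∞) φ ∧ HasCompactSupport φ ∧ tsupport φ ⊆ U ∧
      (∃ V, IsOpen V ∧ Z ⊆ V ∧ ∀ x ∈ V, 1 ≤ φ x) ∧ c = ∫ x in U, (lap φ x) ^ 2 }

def pd {N : ℕ} (i : Fin N) (f : E N → ℝ) (x : E N) : ℝ :=
  fderiv ℝ f x (EuclideanSpace.single i 1)

lemma lap_eq_sum_pd {N : ℕ} (f : E N → ℝ) (x : E N) : lap f x = ∑ i, pd i (pd i f) x := rfl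

lemma contDiff_pd {N : ℕ} {n m : WithTop ℕ∞} (i : Fin N) {f : E N → ℝ} (hf : ContDiff ℝ n f)
    (h : m + 1 ≤ n) : ContDiff ℝ m (pd i f) :=
  (hf.fderiv_right h).clm_apply contDiff_const

lemma contDiff_top_pd {N : ℕ} (i : Fin N) {f : E N → ℝ} (hf : ContDiff ℝ (⊤ : ℕ∞) f) :
    ContDiff ℝ (⊤ : ℕ∞) (pd i f) :=
  contDiff_pd i hf (by exact_mod_cast le_top)

lemma hasCompactSupport_pd {N : ℕ} (i : Fin N) {f : E N → ℝ} (hf : HasCompactSupport f) :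
    HasCompactSupport (pd i f) :=
  hf.fderiv_apply ℝ _

lemma tsupport_pd_subset {N : ℕ} (i : Fin N) (f : E N → ℝ) : tsupport (pd i f) ⊆ tsupport f :=
  tsupport_fderiv_apply_subset ℝ _

lemma lap_eq_zero_of_notMem {N : ℕ} {f : E N → ℝ} {x : E N} (hx : x ∉ tsupport f) :
    lap f x = 0 := by
  rw [lap_eq_sum_pd]
  refine Finset.sum_eq_zero fun i _ => ?_
  exact image_eq_zero_of_notMem_tsupport
    fun h => hx (tsupport_pd_subset _ _ (tsupport_pd_subset _ _ h))

lemma hasCompactSupport_lap {N : ℕ} {f : E N → ℝ} (hf : HasCompactSupport f) :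
    HasCompactSupport (lap f) :=
  HasCompactSupport.intro hf fun _ hx => lap_eq_zero_of_notMem hx

lemma continuous_lap {N : ℕ} {f : E N → ℝ} (hf : ContDiff ℝ 2 f) : Continuous (lap f) := by
  have : lap f = fun x => ∑ i, pd i (pd i f) x := rfl
  rw [this]
  refine continuous_finsetSum _ fun i _ => ?_
  have h1 : ContDiff ℝ 1 (pd i f) := contDiff_pd i hf (by norm_num)
  exact (contDiff_pd (m := 0) i h1 (by norm_num)).continuous

lemma integral_mul_pd {N : ℕ} (i : Fin N) {u v : E N → ℝ} (hu : ContDiff ℝ 1 u)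
    (hv : ContDiff ℝ 1 v) (hvc : HasCompactSupport v) :
    ∫ x, u x * pd i v x = - ∫ x, pd i u x * v x := by
  have cu := (contDiff_pd (m := 0) i hu (by norm_num)).continuous
  have cv := (contDiff_pd (m := 0) i hv (by norm_num)).continuous
  refine integral_mul_fderiv_eq_neg_fderiv_mul_of_integrable ?_ ?_ ?_ ?_ ?_
  · exact (cu.mul hv.continuous).integrable_of_hasCompactSupport hvc.mul_left
  · exact (hu.continuous.mul cv).integrable_of_hasCompactSupport
      (hasCompactSupport_pd i hvc).mul_left
  · exact (hu.continuous.mul hv.continuous).integrable_of_hasCompactSupport hvc.mul_left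
  · exact fun x _ => hu.differentiable (by norm_num) x
  · exact fun x _ => hv.differentiable (by norm_num) x

lemma pd_pd_apply {N : ℕ} (i j : Fin N) {f : E N → ℝ} (hf : ContDiff ℝ 2 f) (x : E N) :
    pd i (pd j f) x =
      fderiv ℝ (fderiv ℝ f) x (EuclideanSpace.single i 1) (EuclideanSpace.single j 1) := by
  have hd : DifferentiableAt ℝ (fderiv ℝ f) x :=
    (hf.fderiv_right (m := 1) (by norm_num)).differentiable (by norm_num) x
  have := (hd.hasFDerivAt.clm_apply (hasFDerivAt_const (EuclideanSpace.single j (1:ℝ)) x)).fderiv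
  unfold pd
  rw [this]
  simp

lemma pd_comm {N : ℕ} (i j : Fin N) {f : E N → ℝ} (hf : ContDiff ℝ 2 f) :
    pd i (pd j f) = pd j (pd i f) := by
  ext x
  rw [pd_pd_apply i j hf, pd_pd_apply j i hf]
  exact (hf.contDiffAt.isSymmSndFDerivAt (by simp)) _ _

lemma integral_sq_pd_pd {N : ℕ} (i j : Fin N) {u : E N → ℝ} (hu : ContDiff ℝ (⊤ : ℕ∞) u)
    (huc : HasCompactSupport u) :
    ∫ x, (pd i (pd j u) x) ^ 2 = ∫ x, pd i (pd i u) x * pd j (pd j u) x := by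
  have le1 : ∀ {f : E N → ℝ}, ContDiff ℝ (⊤ : ℕ∞) f → ContDiff ℝ 1 f :=
    fun h => contDiff_infty.1 h 1
  have le2 : ∀ {f : E N → ℝ}, ContDiff ℝ (⊤ : ℕ∞) f → ContDiff ℝ 2 f :=
    fun h => contDiff_infty.1 h 2
  have si := contDiff_top_pd i hu
  have sj := contDiff_top_pd j hu
  have ci := hasCompactSupport_pd i huc
  have cj := hasCompactSupport_pd j huc
  have e1 := integral_mul_pd i (le1 (contDiff_top_pd i sj)) (le1 sj) cj
  have e2 := integral_mul_pd j (le1 (contDiff_top_pd i si)) (le1 sj) cj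
  have hc : pd i (pd i (pd j u)) = pd j (pd i (pd i u)) := by
    rw [pd_comm i j (le2 hu), pd_comm i j (le2 si)]
  rw [e2, ← hc, ← e1]
  simp only [sq]

lemma integral_sq_lap {N : ℕ} {u : E N → ℝ} (hu : ContDiff ℝ (⊤ : ℕ∞) u)
    (huc : HasCompactSupport u) :
    ∫ x, (lap u x) ^ 2 = ∑ i, ∑ j, ∫ x, (pd i (pd j u) x) ^ 2 := by
  have hint : ∀ i j : Fin N, Integrable (fun x => pd i (pd i u) x * pd j (pd j u) x) := by
    intro i j
    exact ((contDiff_top_pd i (contDiff_top_pd i hu)).continuous.mul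
      (contDiff_top_pd j (contDiff_top_pd j hu)).continuous).integrable_of_hasCompactSupport
      (hasCompactSupport_pd j (hasCompactSupport_pd j huc)).mul_left
  simp_rw [lap_eq_sum_pd, integral_sq_pd_pd _ _ hu huc, sq, Finset.sum_mul_sum]
  rw [integral_finsetSum _ fun i _ => integrable_finsetSum _ fun j _ => hint i j]
  exact Finset.sum_congr rfl fun i _ => integral_finsetSum _ fun j _ => hint i j

lemma integrable_sq_of_hasCompactSupport {N : ℕ} {f : E N → ℝ} (hf : Continuous f)
    (hc : HasCompactSupport f) : Integrable fun x => (f x) ^ 2 := by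
  have : Integrable fun x => f x * f x :=
    (hf.mul hf).integrable_of_hasCompactSupport (hc.mul_left (f := f))
  simpa only [sq] using this

lemma integral_sq_le_integral_sq_pd {N : ℕ} (i : Fin N) {R : ℝ} {u : E N → ℝ}
    (hu : ContDiff ℝ 1 u) (huc : HasCompactSupport u) (hR : tsupport u ⊆ closedBall 0 R) :
    ∫ x, (u x) ^ 2 ≤ 4 * R ^ 2 * ∫ x, (pd i u x) ^ 2 := by
  have cu := hu.continuous
  have cp := (contDiff_pd (m := 0) i hu (by norm_num)).continuous
  have hci : Continuous fun x : E N => x i := by fun_prop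
  have h1 : Integrable fun x => (u x) ^ 2 :=
    integrable_sq_of_hasCompactSupport cu huc
  have h2 : Integrable fun x => (pd i u x) ^ 2 :=
    integrable_sq_of_hasCompactSupport cp (hasCompactSupport_pd i huc)
  have hsq : ContDiff ℝ 1 fun x => u x * u x := hu.mul hu
  have hx : ContDiff ℝ 1 fun x : E N => x i := by fun_prop
  have hpx : ∀ x, pd i (fun x : E N => x i) x = 1 := by
    intro x
    have : HasFDerivAt (fun x : E N => x i) (EuclideanSpace.proj i : E N →L[ℝ] ℝ) x :=
      (EuclideanSpace.proj i : E N →L[ℝ] ℝ).hasFDerivAt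
    simp [pd, this.fderiv]
  have hpu : ∀ x, pd i (fun x => u x * u x) x = 2 * (u x * pd i u x) := by
    intro x
    have hd := (hu.differentiable (by norm_num) x).hasFDerivAt
    have hm : HasFDerivAt (fun x => u x * u x) (u x • fderiv ℝ u x + u x • fderiv ℝ u x) x :=
      hd.mul hd
    simp only [pd, hm.fderiv, add_apply, smul_apply,
      smul_eq_mul]
    ring
  have e := integral_mul_pd i hx hsq (huc.mul_left (f := u))
  simp only [hpx, hpu, one_mul] at e
  have h3 : Integrable fun x => x i * (2 * (u x * pd i u x)) := by
    refine (hci.mul (continuous_const.mul (cu.mul cp))).integrable_of_hasCompactSupport ?_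
    refine HasCompactSupport.intro huc fun x hx => ?_
    simp [image_eq_zero_of_notMem_tsupport hx]
  have e' : ∫ x, (u x) ^ 2 = ∫ x, -(x i * (2 * (u x * pd i u x))) := by
    rw [integral_neg, e, neg_neg]; simp only [sq]
  have hle : ∫ x, -(x i * (2 * (u x * pd i u x))) ≤
      ∫ x, ((1 / 2) * (u x) ^ 2 + 2 * R ^ 2 * (pd i u x) ^ 2) := by
    refine integral_mono h3.neg ((h1.const_mul _).add (h2.const_mul _)) fun x => ?_
    by_cases hxs : x ∈ tsupport u
    · have hxR : |x i| ≤ R := by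
        have := mem_closedBall_zero_iff.1 (hR hxs)
        exact (by simpa using PiLp.norm_apply_le x i : |x i| ≤ ‖x‖).trans this
      have hx2 : (x i) ^ 2 ≤ R ^ 2 := by rw [← sq_abs]; gcongr
      have := mul_le_mul_of_nonneg_right hx2 (sq_nonneg (pd i u x))
      dsimp only
      nlinarith [sq_nonneg (u x + 2 * (x i * pd i u x))]
    · have h0 := image_eq_zero_of_notMem_tsupport hxs
      simp only [h0, zero_mul, mul_zero, neg_zero]
      positivity
  rw [integral_add (h1.const_mul _) (h2.const_mul _), integral_const_mul, integral_const_mul] at hle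
  linarith

/-- The pointwise squared `W^{2,2}` density. -/
def jetSq {N : ℕ} (u : E N → ℝ) (x : E N) : ℝ :=
  (u x) ^ 2 + ∑ i, (pd i u x) ^ 2 + ∑ i, ∑ j, (pd i (pd j u) x) ^ 2

lemma exists_integral_jetSq_le {N : ℕ} (i₀ : Fin N) (R : ℝ) :
    ∃ K : ℝ, 0 ≤ K ∧ ∀ u : E N → ℝ, ContDiff ℝ (⊤ : ℕ∞) u → HasCompactSupport u →
      tsupport u ⊆ closedBall 0 R → ∫ x, jetSq u x ≤ K * ∫ x, (lap u x) ^ 2 := by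
  refine ⟨4 * R ^ 2 * (4 * R ^ 2) + ∑ i : Fin N, 4 * R ^ 2 + 1, by positivity, ?_⟩
  intro u hu huc hR
  have le1 : ∀ {f : E N → ℝ}, ContDiff ℝ (⊤ : ℕ∞) f → ContDiff ℝ 1 f :=
    fun h => contDiff_infty.1 h 1
  have hi : ∀ {f : E N → ℝ}, ContDiff ℝ (⊤ : ℕ∞) f → HasCompactSupport f →
      Integrable fun x => (f x) ^ 2 := fun hf hc =>
    integrable_sq_of_hasCompactSupport hf.continuous hc
  have s1 := fun i => contDiff_top_pd i hu
  have c1 := fun i : Fin N => hasCompactSupport_pd i huc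
  have hi0 := hi hu huc
  have hi1 := fun i => hi (s1 i) (c1 i)
  have hi2 := fun i j => hi (contDiff_top_pd i (s1 j)) (hasCompactSupport_pd i (c1 j))
  have hL := integral_sq_lap hu huc
  have b2 : ∀ i j, ∫ x, (pd i (pd j u) x) ^ 2 ≤ ∫ x, (lap u x) ^ 2 := by
    intro i j
    rw [hL]
    calc _ ≤ ∑ j, ∫ x, (pd i (pd j u) x) ^ 2 :=
          Finset.single_le_sum (f := fun j => ∫ x, (pd i (pd j u) x) ^ 2)
            (fun j _ => integral_nonneg fun x => sq_nonneg _) (Finset.mem_univ j)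
      _ ≤ _ := Finset.single_le_sum (f := fun i => ∑ j, ∫ x, (pd i (pd j u) x) ^ 2)
            (fun i _ => Finset.sum_nonneg fun j _ => integral_nonneg fun x => sq_nonneg _)
            (Finset.mem_univ i)
  have b1 : ∀ i, ∫ x, (pd i u x) ^ 2 ≤ 4 * R ^ 2 * ∫ x, (lap u x) ^ 2 := fun i =>
    (integral_sq_le_integral_sq_pd i (le1 (s1 i)) (c1 i)
      ((tsupport_pd_subset i u).trans hR)).trans
      (mul_le_mul_of_nonneg_left (b2 i i) (by positivity))
  have b0 : ∫ x, (u x) ^ 2 ≤ 4 * R ^ 2 * (4 * R ^ 2 * ∫ x, (lap u x) ^ 2) :=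
    (integral_sq_le_integral_sq_pd i₀ (le1 hu) huc hR).trans
      (mul_le_mul_of_nonneg_left (b1 i₀) (by positivity))
  have e : ∫ x, jetSq u x = (∫ x, (u x) ^ 2) + (∑ i, ∫ x, (pd i u x) ^ 2) +
      ∑ i, ∑ j, ∫ x, (pd i (pd j u) x) ^ 2 := by
    simp only [jetSq]
    rw [integral_add, integral_add hi0, integral_finsetSum _ fun i _ => hi1 i, integral_finsetSum]
    · congr 1
      exact Finset.sum_congr rfl fun i _ => integral_finsetSum _ fun j _ => hi2 i j
    · exact fun i _ => integrable_finsetSum _ fun j _ => hi2 i j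
    · exact integrable_finsetSum _ fun i _ => hi1 i
    · exact hi0.add (integrable_finsetSum _ fun i _ => hi1 i)
    · exact integrable_finsetSum _ fun i _ => integrable_finsetSum _ fun j _ => hi2 i j
  rw [e, ← hL]
  have := Finset.sum_le_sum fun i (_ : i ∈ Finset.univ) => b1 i
  rw [← Finset.sum_mul] at this
  linarith

lemma norm_le_sum_norm_apply_single {N : ℕ} {V : Type*} [NormedAddCommGroup V] [NormedSpace ℝ V]
    (T : E N →L[ℝ] V) : ‖T‖ ≤ ∑ i, ‖T (EuclideanSpace.single i 1)‖ := by
  refine T.opNorm_le_bound (Finset.sum_nonneg fun i _ => norm_nonneg _) fun x => ?_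
  have hx : x = ∑ i, x i • EuclideanSpace.single i (1 : ℝ) := by
    have := (EuclideanSpace.basisFun (Fin N) ℝ).sum_repr x
    simpa using this.symm
  calc ‖T x‖ = ‖∑ i, x i • T (EuclideanSpace.single i 1)‖ := by
        conv_lhs => rw [hx]
        simp only [map_sum, map_smul]
    _ ≤ ∑ i, ‖x i • T (EuclideanSpace.single i 1)‖ := norm_sum_le _ _
    _ ≤ ∑ i, ‖T (EuclideanSpace.single i 1)‖ * ‖x‖ := by
        refine Finset.sum_le_sum fun i _ => ?_
        rw [norm_smul, mul_comm]
        exact mul_le_mul_of_nonneg_left (PiLp.norm_apply_le x i) (norm_nonneg _)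
    _ = _ := by rw [Finset.sum_mul]

lemma norm_iteratedFDeriv_two_eq {N : ℕ} (f : E N → ℝ) (x : E N) :
    ‖iteratedFDeriv ℝ 2 f x‖ = ‖fderiv ℝ (fderiv ℝ f) x‖ := by
  rw [← norm_iteratedFDeriv_one (f := fderiv ℝ f), norm_iteratedFDeriv_fderiv]

lemma abs_lap_le {N : ℕ} {f : E N → ℝ} (hf : ContDiff ℝ 2 f) (x : E N) :
    |lap f x| ≤ N * ‖iteratedFDeriv ℝ 2 f x‖ := by
  rw [lap_eq_sum_pd, norm_iteratedFDeriv_two_eq]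
  calc _ ≤ ∑ i, |pd i (pd i f) x| := Finset.abs_sum_le_sum_abs _ _
    _ ≤ ∑ i : Fin N, ‖fderiv ℝ (fderiv ℝ f) x‖ := by
        refine Finset.sum_le_sum fun i _ => ?_
        rw [pd_pd_apply i i hf, ← Real.norm_eq_abs]
        have := (fderiv ℝ (fderiv ℝ f) x).le_opNorm₂ (EuclideanSpace.single i (1:ℝ))
          (EuclideanSpace.single i (1:ℝ))
        simpa using this
    _ = _ := by simp

lemma jetSq_nonneg {N : ℕ} (u : E N → ℝ) (x : E N) : 0 ≤ jetSq u x := by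
  unfold jetSq; positivity

lemma norm_iteratedFDeriv_le_sqrt_jetSq {N : ℕ} {u : E N → ℝ} (hu : ContDiff ℝ 2 u) (x : E N)
    {k : ℕ} (hk : k ≤ 2) :
    ‖iteratedFDeriv ℝ k u x‖ ≤ (1 + N + N * N) * √(jetSq u x) := by
  have hs := Real.sqrt_nonneg (jetSq u x)
  have hN : (0 : ℝ) ≤ N := Nat.cast_nonneg N
  have p1 : 0 ≤ ∑ i, (pd i u x) ^ 2 := by positivity
  have p2 : 0 ≤ ∑ i, ∑ j, (pd i (pd j u) x) ^ 2 := by positivity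
  have b0 : |u x| ≤ √(jetSq u x) := Real.abs_le_sqrt (by unfold jetSq; linarith)
  have b1 : ∀ i, |pd i u x| ≤ √(jetSq u x) := fun i => Real.abs_le_sqrt <| by
    have := Finset.single_le_sum (f := fun i => (pd i u x) ^ 2) (fun i _ => sq_nonneg _)
      (Finset.mem_univ i)
    unfold jetSq
    nlinarith [sq_nonneg (u x)]
  have b2 : ∀ i j, |pd i (pd j u) x| ≤ √(jetSq u x) := fun i j => Real.abs_le_sqrt <| by
    have h1 := Finset.single_le_sum (f := fun j => (pd i (pd j u) x) ^ 2) (fun j _ => sq_nonneg _)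
      (Finset.mem_univ j)
    have h2 := Finset.single_le_sum (f := fun i => ∑ j, (pd i (pd j u) x) ^ 2)
      (fun i _ => Finset.sum_nonneg fun j _ => sq_nonneg _) (Finset.mem_univ i)
    unfold jetSq
    nlinarith [sq_nonneg (u x)]
  interval_cases k
  · rw [norm_iteratedFDeriv_zero, Real.norm_eq_abs]
    nlinarith [mul_nonneg hN hs, mul_nonneg (mul_nonneg hN hN) hs]
  · rw [norm_iteratedFDeriv_one]
    have := calc ‖fderiv ℝ u x‖ ≤ ∑ i, ‖fderiv ℝ u x (EuclideanSpace.single i 1)‖ :=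
          norm_le_sum_norm_apply_single _
      _ ≤ ∑ i : Fin N, √(jetSq u x) := Finset.sum_le_sum fun i _ => b1 i
      _ = N * √(jetSq u x) := by simp
    nlinarith [mul_nonneg hN hs, mul_nonneg (mul_nonneg hN hN) hs]
  · rw [norm_iteratedFDeriv_two_eq]
    have := calc ‖fderiv ℝ (fderiv ℝ u) x‖
          ≤ ∑ i, ‖fderiv ℝ (fderiv ℝ u) x (EuclideanSpace.single i 1)‖ :=
          norm_le_sum_norm_apply_single _
      _ ≤ ∑ i : Fin N, ∑ j : Fin N, √(jetSq u x) := by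
          refine Finset.sum_le_sum fun i _ => (norm_le_sum_norm_apply_single _).trans ?_
          refine Finset.sum_le_sum fun j _ => ?_
          rw [← pd_pd_apply i j hu]
          exact b2 i j
      _ = N * N * √(jetSq u x) := by simp; ring
    nlinarith [mul_nonneg hN hs, mul_nonneg (mul_nonneg hN hN) hs]

lemma exists_norm_iteratedFDeriv_le {N : ℕ} {V : Type*} [NormedAddCommGroup V] [NormedSpace ℝ V]
    {f : E N → V} (hf : ContDiff ℝ 2 f) (hc : HasCompactSupport f) :
    ∃ B : ℝ, 1 ≤ B ∧ ∀ k ≤ 2, ∀ x, ‖iteratedFDeriv ℝ k f x‖ ≤ B := by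
  have h : ∀ k : ℕ, ∃ B : ℝ, k ≤ 2 → ∀ x, ‖iteratedFDeriv ℝ k f x‖ ≤ B := by
    intro k
    by_cases hk : k ≤ 2
    · obtain ⟨B, hB⟩ := (hf.continuous_iteratedFDeriv (m := k)
        (by exact_mod_cast hk)).bounded_above_of_compact_support (hc.iteratedFDeriv k)
      exact ⟨B, fun _ => hB⟩
    · exact ⟨0, fun h => absurd h hk⟩
  choose B hB using h
  refine ⟨1 + |B 0| + |B 1| + |B 2|, ?_, ?_⟩
  · linarith [abs_nonneg (B 0), abs_nonneg (B 1), abs_nonneg (B 2)]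
  · intro k hk x
    have := hB k hk x
    have h0 := abs_nonneg (B 0)
    have h1 := abs_nonneg (B 1)
    have h2 := abs_nonneg (B 2)
    have := le_abs_self (B k)
    interval_cases k <;> linarith

lemma exists_sq_lap_mul_comp_le {N : ℕ} {χ : E N → ℝ} {H : E N → E N}
    (hχ : ContDiff ℝ 2 χ) (hχc : HasCompactSupport χ) (hH : ContDiff ℝ 2 H)
    (hHc : HasCompactSupport H) :
    ∃ M : ℝ, 0 ≤ M ∧ ∀ u : E N → ℝ, ContDiff ℝ 2 u → ∀ y,
      (lap (fun y => χ y * u (H y)) y) ^ 2 ≤ M * jetSq u (H y) := by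
  obtain ⟨B, hB1, hB⟩ := exists_norm_iteratedFDeriv_le hχ hχc
  obtain ⟨D, hD1, hD⟩ := exists_norm_iteratedFDeriv_le hH hHc
  set c : ℝ := 1 + N + N * N with hc
  refine ⟨(N * (4 * (B * (2 * c * D ^ 2)))) ^ 2, sq_nonneg _, fun u hu y => ?_⟩
  set s := √(jetSq u (H y)) with hs
  have hs0 : 0 ≤ s := Real.sqrt_nonneg _
  have hc0 : 0 ≤ c := by positivity
  have hcomp : ∀ k ≤ 2, ‖iteratedFDeriv ℝ k (fun y => u (H y)) y‖ ≤ 2 * c * D ^ 2 * s := by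
    intro k hk
    have := norm_iteratedFDeriv_comp_le (n := k) (N := 2) hu hH (by exact_mod_cast hk) y
      (C := c * s) (D := D)
      (fun i hi => norm_iteratedFDeriv_le_sqrt_jetSq hu (H y) (hi.trans hk))
      (fun i hi1 hi => (hD i (hi.trans hk) y).trans (le_self_pow₀ hD1 (by omega)))
    refine this.trans ?_
    have hf : (k.factorial : ℝ) ≤ 2 := by
      exact_mod_cast (Nat.factorial_le hk)
    have hp : D ^ k ≤ D ^ 2 := pow_le_pow_right₀ hD1 hk
    calc (k.factorial : ℝ) * (c * s) * D ^ k ≤ 2 * (c * s) * D ^ 2 := by gcongr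
      _ = _ := by ring
  have hmul := norm_iteratedFDeriv_mul_le hχ (hu.comp hH) y (n := 2) le_rfl
  have hle : ‖iteratedFDeriv ℝ 2 (fun y => χ y * u (H y)) y‖ ≤
      4 * (B * (2 * c * D ^ 2)) * s := by
    refine hmul.trans ?_
    calc _ ≤ ∑ i ∈ Finset.range (2 + 1), ((2 : ℕ).choose i : ℝ) * B * (2 * c * D ^ 2 * s) := by
          refine Finset.sum_le_sum fun i hi => ?_
          have hi' := Finset.mem_range.1 hi
          gcongr
          · exact hB i (by omega) y
          · exact hcomp (2 - i) (by omega)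
      _ = _ := by simp [Finset.sum_range_succ]; ring
  have hl := abs_lap_le (hχ.mul (hu.comp hH)) y
  have h3 : |lap (fun y => χ y * u (H y)) y| ≤ N * (4 * (B * (2 * c * D ^ 2))) * s :=
    hl.trans ((mul_le_mul_of_nonneg_left hle (Nat.cast_nonneg N)).trans_eq (by ring))
  calc (lap (fun y => χ y * u (H y)) y) ^ 2 = |lap (fun y => χ y * u (H y)) y| ^ 2 :=
        (sq_abs _).symm
    _ ≤ (N * (4 * (B * (2 * c * D ^ 2))) * s) ^ 2 := by gcongr
    _ = _ := by rw [mul_pow, hs, Real.sq_sqrt (jetSq_nonneg _ _)]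

lemma exists_cutoff {N : ℕ} {K U : Set (E N)} (hK : IsCompact K) (hU : IsOpen U) (hKU : K ⊆ U) :
    ∃ χ : E N → ℝ, ContDiff ℝ (⊤ : ℕ∞) χ ∧ HasCompactSupport χ ∧ tsupport χ ⊆ U ∧
      ∃ V, IsOpen V ∧ K ⊆ V ∧ ∀ x ∈ V, χ x = 1 := by
  obtain ⟨L, hL, hKL, hLU⟩ := exists_compact_between hK hU hKU
  obtain ⟨f, h1, h0, -⟩ := exists_contMDiffMap_one_nhds_of_subset_interior
    (n := (⊤ : ℕ∞)) (modelWithCornersSelf ℝ (E N)) hK.isClosed hKL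
  have hsub : tsupport f ⊆ L := closure_minimal
    (fun x hx => by_contra fun h => hx (h0 x h)) hL.isClosed
  obtain ⟨V, hV, hKV, hV1⟩ := eventually_nhdsSet_iff_exists.1 h1
  exact ⟨f, f.contMDiff.contDiff, hL.of_isClosed_subset (isClosed_tsupport _) hsub,
    hsub.trans hLU, V, hV, hKV, hV1⟩

lemma exists_setIntegral_comp_le {N : ℕ} {F G : E N → E N}
    (hFdiff : ContDiffOn ℝ 2 F ({0}ᶜ : Set (E N)))
    (hGdiff : ContDiffOn ℝ 2 G ({0}ᶜ : Set (E N)))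
    (hFbij : Set.BijOn F ({0}ᶜ : Set (E N)) ({0}ᶜ : Set (E N)))
    (hInv : Set.InvOn G F ({0}ᶜ : Set (E N)) ({0}ᶜ : Set (E N)))
    {K : Set (E N)} (hK : IsCompact K) (hK0 : K ⊆ ({0}ᶜ : Set (E N))) :
    ∃ L : ℝ, 0 ≤ L ∧ ∀ h : E N → ℝ, Integrable h → (∀ x, 0 ≤ h x) →
      ∫ y in K, h (G y) ≤ L * ∫ x, h x := by
  have hGmaps : MapsTo G ({0}ᶜ : Set (E N)) ({0}ᶜ : Set (E N)) := by
    intro y hy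
    obtain ⟨x, hx, rfl⟩ := hFbij.surjOn hy
    rw [hInv.1 hx]
    exact hx
  have hK' : IsCompact (G '' K) := hK.image_of_continuousOn (hGdiff.continuousOn.mono hK0)
  have hK'0 : G '' K ⊆ ({0}ᶜ : Set (E N)) := by
    rintro _ ⟨y, hy, rfl⟩
    exact hGmaps (hK0 hy)
  have hFK : F '' (G '' K) = K := by
    rw [image_image]
    exact (image_congr fun y hy => hInv.2 (hK0 hy)).trans (image_id' K)
  have hderiv : ∀ x ∈ G '' K, HasFDerivWithinAt F (fderiv ℝ F x) (G '' K) x := fun x hx =>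
    ((hFdiff.contDiffAt (isOpen_compl_singleton.mem_nhds (hK'0 hx))).differentiableAt
      (by norm_num)).hasFDerivAt.hasFDerivWithinAt
  have hcont : ContinuousOn (fun x => |(fderiv ℝ F x).det|) (G '' K) :=
    (ContinuousLinearMap.continuous_det.comp_continuousOn
      ((hFdiff.continuousOn_fderiv_of_isOpen isOpen_compl_singleton (by norm_num)).mono
        hK'0)).abs
  obtain ⟨L, hL⟩ := hK'.bddAbove_image hcont
  refine ⟨max L 0, le_max_right _ _, fun h hint hnn => ?_⟩
  have hinj : InjOn F (G '' K) := hFbij.injOn.mono hK'0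
  have hcv := integral_image_eq_integral_abs_det_fderiv_smul volume hK'.measurableSet hderiv hinj
    (fun y => h (G y))
  rw [hFK] at hcv
  rw [hcv]
  have hcongr : ∫ x in G '' K, |(fderiv ℝ F x).det| • h (G (F x)) =
      ∫ x in G '' K, |(fderiv ℝ F x).det| * h x := by
    refine setIntegral_congr_fun hK'.measurableSet fun x hx => ?_
    simp only [hInv.1 (hK'0 hx), smul_eq_mul]
  rw [hcongr]
  have hb : ∀ x ∈ G '' K, |(fderiv ℝ F x).det| * h x ≤ max L 0 * h x := fun x hx =>
    mul_le_mul_of_nonneg_right ((hL (mem_image_of_mem _ hx)).trans (le_max_left _ _)) (hnn x)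
  calc ∫ x in G '' K, |(fderiv ℝ F x).det| * h x ≤ ∫ x in G '' K, max L 0 * h x := by
        refine integral_mono_of_nonneg (Eventually.of_forall fun x => ?_)
          (hint.integrableOn.const_mul _) ?_
        · exact mul_nonneg (abs_nonneg _) (hnn x)
        · exact (ae_restrict_iff' hK'.measurableSet).2 (Eventually.of_forall hb)
    _ = max L 0 * ∫ x in G '' K, h x := integral_const_mul _ _
    _ ≤ _ := mul_le_mul_of_nonneg_left
        (setIntegral_le_integral hint (Eventually.of_forall hnn)) (le_max_right _ _)

open scoped Convolution Topology in
lemma pd_convolution {N : ℕ} (i : Fin N) {f g : E N → ℝ} (hf : Continuous f)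
    (hg : ContDiff ℝ 1 g) (hgc : HasCompactSupport g) :
    pd i (f ⋆[ContinuousLinearMap.lsmul ℝ ℝ, volume] g) =
      f ⋆[ContinuousLinearMap.lsmul ℝ ℝ, volume] pd i g := by
  ext x
  have h := hgc.hasFDerivAt_convolution_right (ContinuousLinearMap.lsmul ℝ ℝ)
    (μ := volume) hf.locallyIntegrable hg x
  simp only [pd, h.fderiv]
  exact convolution_precompR_apply _ hf.locallyIntegrable (hgc.fderiv ℝ)
    (hg.continuous_fderiv (by norm_num)) _ _

open scoped Topology in
lemma eventually_forall_dist_le {N : ℕ} {h : E N → ℝ} (hh : Continuous h)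
    (hc : HasCompactSupport h) {η : ℝ} (hη : 0 < η) :
    ∀ᶠ δ in 𝓝[>] (0 : ℝ), ∀ x, ∀ y ∈ ball x δ, dist (h y) (h x) ≤ η := by
  obtain ⟨δ, hδ, hδh⟩ :=
    Metric.uniformContinuous_iff.1 (hc.uniformContinuous_of_continuous hh) η hη
  filter_upwards [Ioo_mem_nhdsGT hδ] with r hr x y hy
  exact (hδh ((mem_ball.1 hy).trans hr.2)).le

open scoped Convolution Topology in
/-- Uniform `C²`-type approximation of a compactly supported function by smooth functions whose
supports lie in an arbitrarily small neighbourhood of the original support. -/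
lemma exists_smooth_approx {N : ℕ} {ψ : E N → ℝ} (hψ : ContDiff ℝ 2 ψ) (hψc : HasCompactSupport ψ)
    {r η : ℝ} (hr : 0 < r) (hη : 0 < η) :
    ∃ φ : E N → ℝ, ContDiff ℝ (⊤ : ℕ∞) φ ∧ tsupport φ ⊆ cthickening r (tsupport ψ) ∧
      (∀ x, |φ x - ψ x| ≤ η) ∧ ∀ x, |lap φ x - lap ψ x| ≤ N * η := by
  have h1 : ∀ i, ContDiff ℝ 1 (pd i ψ) := fun i => contDiff_pd i hψ (by norm_num)
  have h2 : ∀ i, Continuous (pd i (pd i ψ)) := fun i =>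
    (contDiff_pd (m := 0) i (h1 i) (by norm_num)).continuous
  have hev : ∀ᶠ δ in 𝓝[>] (0 : ℝ), 0 < δ ∧ δ < r ∧
      (∀ x, ∀ y ∈ ball x δ, dist (ψ y) (ψ x) ≤ η) ∧
      ∀ i, ∀ x, ∀ y ∈ ball x δ, dist (pd i (pd i ψ) y) (pd i (pd i ψ) x) ≤ η := by
    filter_upwards [Ioo_mem_nhdsGT hr, eventually_forall_dist_le hψ.continuous hψc hη,
      eventually_all.2 fun i => eventually_forall_dist_le (h2 i)
        (hasCompactSupport_pd i (hasCompactSupport_pd i hψc)) hη] with δ a b c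
    exact ⟨a.1, a.2, b, c⟩
  obtain ⟨δ, hδ, hδr, hd0, hd2⟩ := hev.exists
  let ρ : ContDiffBump (0 : E N) := ⟨δ / 2, δ, by positivity, by linarith⟩
  have hρc : Continuous (ρ.normed volume) := ρ.continuous_normed
  set φ := (ρ.normed volume) ⋆[ContinuousLinearMap.lsmul ℝ ℝ, volume] ψ with hφ
  have hpd : ∀ i, pd i (pd i φ) =
      (ρ.normed volume) ⋆[ContinuousLinearMap.lsmul ℝ ℝ, volume] pd i (pd i ψ) := fun i => by
    rw [hφ, pd_convolution i hρc (hψ.of_le (by norm_num)) hψc,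
      pd_convolution i hρc (h1 i) (hasCompactSupport_pd i hψc)]
  refine ⟨φ, ?_, ?_, ?_, ?_⟩
  · exact ρ.hasCompactSupport_normed.contDiff_convolution_left _ ρ.contDiff_normed
      hψ.continuous.locallyIntegrable
  · refine closure_minimal (fun x hx => ?_) isClosed_cthickening
    by_contra hxn
    have hz : ∀ y ∈ ball x δ, ψ y = 0 := by
      intro y hy
      refine image_eq_zero_of_notMem_tsupport fun hyt => hxn ?_
      refine mem_cthickening_of_dist_le x y r _ hyt ?_
      rw [dist_comm]
      exact (mem_ball.1 hy).le.trans hδr.le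
    have hzx := hz x (mem_ball_self hδ)
    have := ρ.dist_normed_convolution_le (μ := volume) (x₀ := x) (ε := 0)
      hψ.continuous.aestronglyMeasurable (fun y hy => by rw [hz y hy, hzx, dist_self])
    rw [hzx] at this
    exact hx (dist_le_zero.1 this)
  · intro x
    exact ρ.dist_normed_convolution_le (μ := volume) hψ.continuous.aestronglyMeasurable (hd0 x)
  · intro x
    rw [lap_eq_sum_pd, lap_eq_sum_pd, ← Finset.sum_sub_distrib]
    calc _ ≤ ∑ i, |pd i (pd i φ) x - pd i (pd i ψ) x| := Finset.abs_sum_le_sum_abs _ _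
      _ ≤ ∑ i : Fin N, η := by
          refine Finset.sum_le_sum fun i _ => ?_
          rw [hpd]
          exact ρ.dist_normed_convolution_le (μ := volume) (h2 i).aestronglyMeasurable (hd2 i x)
      _ = _ := by simp

lemma setIntegral_sq_lap {N : ℕ} {φ : E N → ℝ} {U : Set (E N)} (h : tsupport φ ⊆ U) :
    ∫ x in U, (lap φ x) ^ 2 = ∫ x, (lap φ x) ^ 2 :=
  setIntegral_eq_integral_of_forall_compl_eq_zero fun x hx => by
    rw [lap_eq_zero_of_notMem fun hx' => hx (h hx')]; simp

lemma zero_mem_lowerBounds_capD {N : ℕ} (U Z : Set (E N)) : 0 ∈ lowerBounds { c | ∃ φ : E N → ℝ,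
      ContDiff ℝ (⊤ : ℕ∞) φ ∧ HasCompactSupport φ ∧ tsupport φ ⊆ U ∧
      (∃ V, IsOpen V ∧ Z ⊆ V ∧ ∀ x ∈ V, 1 ≤ φ x) ∧ c = ∫ x in U, (lap φ x) ^ 2 } := by
  rintro c ⟨φ, -, -, -, -, rfl⟩
  exact integral_nonneg fun x => sq_nonneg _

lemma capD_nonneg {N : ℕ} (U Z : Set (E N)) : 0 ≤ capD U Z :=
  Real.sInf_nonneg (zero_mem_lowerBounds_capD U Z)

lemma continuous_jetSq {N : ℕ} {u : E N → ℝ} (hu : ContDiff ℝ (⊤ : ℕ∞) u) :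
    Continuous (jetSq u) := by
  have s0 := hu.continuous
  have s1 := fun i => (contDiff_top_pd i hu).continuous
  have s2 := fun i j => (contDiff_top_pd i (contDiff_top_pd j hu)).continuous
  unfold jetSq
  fun_prop

lemma integrable_jetSq {N : ℕ} {u : E N → ℝ} (hu : ContDiff ℝ (⊤ : ℕ∞) u)
    (huc : HasCompactSupport u) : Integrable (jetSq u) := by
  have s1 := fun i => contDiff_top_pd i hu
  have c1 := fun i : Fin N => hasCompactSupport_pd i huc
  refine ((integrable_sq_of_hasCompactSupport hu.continuous huc).add
    (integrable_finsetSum _ fun i _ => ?_)).add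
    (integrable_finsetSum _ fun i _ => integrable_finsetSum _ fun j _ => ?_)
  · exact integrable_sq_of_hasCompactSupport (s1 i).continuous (c1 i)
  · exact integrable_sq_of_hasCompactSupport (contDiff_top_pd i (s1 j)).continuous
      (hasCompactSupport_pd i (c1 j))

/-- Functions of class `C²` may be used as capacity test functions, up to a constant factor. -/
lemma capD_le_of_contDiff_two {N : ℕ} {ψ : E N → ℝ} {U Z V : Set (E N)} (hψ : ContDiff ℝ 2 ψ)
    (hψc : HasCompactSupport ψ) (hU : IsOpen U) (hψU : tsupport ψ ⊆ U) (hV : IsOpen V)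
    (hZV : Z ⊆ V) (hψV : ∀ x ∈ V, 2 ≤ ψ x) :
    capD U Z ≤ 2 * ∫ x, (lap ψ x) ^ 2 := by
  obtain ⟨r, hr, hrU⟩ := IsCompact.exists_cthickening_subset_open hψc hU hψU
  have hK : IsCompact (cthickening r (tsupport ψ)) := IsCompact.cthickening hψc
  have hiψ : Integrable fun x => (lap ψ x) ^ 2 :=
    integrable_sq_of_hasCompactSupport (continuous_lap hψ) (hasCompactSupport_lap hψc)
  have key : ∀ η : ℝ, 0 < η → η ≤ 1 → capD U Z ≤ 2 * (∫ x, (lap ψ x) ^ 2) +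
      2 * (N * η) ^ 2 * volume.real (cthickening r (tsupport ψ)) := by
    intro η hη hη1
    obtain ⟨φ, hφ, hφs, hφψ, hlap⟩ := exists_smooth_approx hψ hψc hr hη
    have hφc : HasCompactSupport φ := hK.of_isClosed_subset (isClosed_tsupport _) hφs
    have hiφ : Integrable fun x => (lap φ x) ^ 2 :=
      integrable_sq_of_hasCompactSupport (continuous_lap (contDiff_infty.1 hφ 2))
        (hasCompactSupport_lap hφc)
    refine (csInf_le ⟨0, zero_mem_lowerBounds_capD U Z⟩ ⟨φ, hφ, hφc, hφs.trans hrU, ⟨V, hV, hZV, ?_⟩,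
      rfl⟩).trans ?_
    · intro x hx
      have := (abs_le.1 (hφψ x)).1
      linarith [hψV x hx]
    · rw [setIntegral_sq_lap (hφs.trans hrU), ← setIntegral_sq_lap hφs]
      have hconst : IntegrableOn (fun _ : E N => 2 * (N * η) ^ 2) (cthickening r (tsupport ψ)) :=
        integrableOn_const hK.measure_lt_top.ne
      have hle : ∫ x in cthickening r (tsupport ψ), (lap φ x) ^ 2 ≤
          ∫ x in cthickening r (tsupport ψ), (2 * (lap ψ x) ^ 2 + 2 * (N * η) ^ 2) := by
        refine integral_mono hiφ.integrableOn ((hiψ.integrableOn.const_mul 2).add hconst)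
          fun x => ?_
        have h1 : (lap φ x - lap ψ x) ^ 2 ≤ (N * η) ^ 2 := by
          rw [← sq_abs]
          have := hlap x
          gcongr
        dsimp only
        nlinarith [sq_nonneg (lap φ x - 2 * lap ψ x)]
      rw [integral_add (hiψ.integrableOn.const_mul 2) hconst, integral_const_mul,
        setIntegral_const, smul_eq_mul] at hle
      have h3 := setIntegral_le_integral (s := cthickening r (tsupport ψ)) hiψ
        (Eventually.of_forall fun x => sq_nonneg _)
      linarith
  have hlim : Tendsto (fun η : ℝ => 2 * (∫ x, (lap ψ x) ^ 2) +
      2 * (N * η) ^ 2 * volume.real (cthickening r (tsupport ψ))) (nhdsWithin 0 (Ioi 0))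
      (nhds (2 * ∫ x, (lap ψ x) ^ 2)) := by
    have hc : Continuous fun η : ℝ => 2 * (∫ x, (lap ψ x) ^ 2) +
      2 * (N * η) ^ 2 * volume.real (cthickening r (tsupport ψ)) := by fun_prop
    have := (hc.tendsto 0).mono_left (nhdsWithin_le_nhds (s := Ioi 0))
    simpa using this
  refine ge_of_tendsto hlim ?_
  filter_upwards [Ioo_mem_nhdsGT (zero_lt_one' ℝ)] with η h
  exact key η h.1 h.2.le

theorem diffeo_capacity_zero {N : ℕ} (hN : 5 ≤ N)
    (F G : E N → E N)
    (hFdiff : ContDiffOn ℝ 2 F ({0}ᶜ : Set (E N)))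
    (hGdiff : ContDiffOn ℝ 2 G ({0}ᶜ : Set (E N)))
    (hFbij : Set.BijOn F ({0}ᶜ : Set (E N)) ({0}ᶜ : Set (E N)))
    (hInv : Set.InvOn G F ({0}ᶜ : Set (E N)) ({0}ᶜ : Set (E N)))
    (A : Set (E N)) (hAopen : IsOpen A) (hAbdd : Bornology.IsBounded A)
    (hA0 : A ⊆ ({0}ᶜ : Set (E N)))
    (C : Set (E N)) (hCc : IsCompact C) (hCA : C ⊆ A)
    (hcap : capD A C = 0) :
    capD (F '' A) (F '' C) = 0 := by

  set Ω : Set (E N) := {0}ᶜ with hΩ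
  have hΩo : IsOpen Ω := isOpen_compl_singleton
  have hFA : F '' A = Ω ∩ G ⁻¹' A := by
    ext y
    constructor
    · rintro ⟨x, hx, rfl⟩
      exact ⟨hFbij.mapsTo (hA0 hx), by rwa [mem_preimage, hInv.1 (hA0 hx)]⟩
    · rintro ⟨hy, hyA⟩
      exact ⟨G y, hyA, hInv.2 hy⟩
  have hFAo : IsOpen (F '' A) := hFA ▸ hGdiff.continuousOn.isOpen_inter_preimage hΩo hAopen
  have hFAΩ : F '' A ⊆ Ω := hFA ▸ inter_subset_left
  have hFC : IsCompact (F '' C) := hCc.image_of_continuousOn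
    (hFdiff.continuousOn.mono (hCA.trans hA0))
  obtain ⟨χ, hχ, hχc, hχA, V₁, hV₁, hCV₁, hχ1⟩ := exists_cutoff hFC hFAo (image_mono hCA)
  obtain ⟨θ, hθ, hθc, hθΩ, V₂, hV₂, hχV₂, hθ1⟩ := exists_cutoff hχc hΩo (hχA.trans hFAΩ)
  let H : E N → E N := fun y => θ y • G y
  have hHs : tsupport H ⊆ tsupport θ := tsupport_smul_subset_left θ G
  have hH : ContDiff ℝ 2 H := by
    refine contDiff_iff_contDiffAt.2 fun y => ?_
    by_cases hy : y ∈ tsupport H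
    · exact (contDiff_infty.1 hθ 2).contDiffAt.smul
        (hGdiff.contDiffAt (hΩo.mem_nhds (hθΩ (hHs hy))))
    · exact contDiffAt_const.congr_of_eventuallyEq (notMem_tsupport_iff_eventuallyEq.1 hy)
  have hHc : HasCompactSupport H := hθc.of_isClosed_subset (isClosed_tsupport _) hHs
  have hHG : ∀ y ∈ tsupport χ, H y = G y := fun y hy => by simp [H, hθ1 y (hχV₂ hy)]
  have hχ2 : ContDiff ℝ 2 (fun y => 2 * χ y) := contDiff_const.mul (contDiff_infty.1 hχ 2)
  have hχ2s : tsupport (fun y => 2 * χ y) ⊆ tsupport χ :=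
    tsupport_mul_subset_right (f := fun _ => (2 : ℝ)) (g := χ)
  have hχ2c : HasCompactSupport (fun y => 2 * χ y) :=
    hχc.of_isClosed_subset (isClosed_tsupport _) hχ2s
  obtain ⟨M, hM0, hM⟩ := exists_sq_lap_mul_comp_le hχ2 hχ2c hH hHc
  obtain ⟨L, hL0, hL⟩ := exists_setIntegral_comp_le hFdiff hGdiff hFbij hInv hχc
    (hχA.trans hFAΩ)
  obtain ⟨R, hR⟩ := hAbdd.subset_closedBall 0
  obtain ⟨K, hK0, hK⟩ := exists_integral_jetSq_le (N := N) ⟨0, by omega⟩ R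
  have key : ∀ ε : ℝ, 0 < ε → capD (F '' A) (F '' C) ≤ 2 * (M * (L * (K * ε))) := by
    intro ε hε
    have hne : { c | ∃ φ : E N → ℝ, ContDiff ℝ (⊤ : ℕ∞) φ ∧ HasCompactSupport φ ∧
        tsupport φ ⊆ A ∧ (∃ V, IsOpen V ∧ C ⊆ V ∧ ∀ x ∈ V, 1 ≤ φ x) ∧
        c = ∫ x in A, (lap φ x) ^ 2 }.Nonempty := by
      obtain ⟨φ, h1, h2, h3, V, h4, h5, h6⟩ := exists_cutoff hCc hAopen hCA
      exact ⟨_, φ, h1, h2, h3, ⟨V, h4, h5, fun x hx => (h6 x hx).ge⟩, rfl⟩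
    obtain ⟨_, ⟨φ, hφ, hφc, hφA, ⟨V, hV, hCV, hφ1⟩, rfl⟩, hφε⟩ :=
      exists_lt_of_csInf_lt hne (hcap.trans_lt hε)
    rw [setIntegral_sq_lap hφA] at hφε
    have hφ2 := contDiff_infty.1 hφ 2
    set ψ : E N → ℝ := fun y => (2 * χ y) * φ (H y) with hψdef
    have hψ : ContDiff ℝ 2 ψ := hχ2.mul (hφ2.comp hH)
    have hψs : tsupport ψ ⊆ tsupport χ :=
      (tsupport_mul_subset_left (f := fun y => 2 * χ y) (g := fun y => φ (H y))).trans hχ2s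
    have hψc : HasCompactSupport ψ := hχc.of_isClosed_subset (isClosed_tsupport _) hψs
    have hcap' := capD_le_of_contDiff_two (Z := F '' C) (V := V₁ ∩ V₂ ∩ (Ω ∩ G ⁻¹' V)) hψ hψc
      hFAo (hψs.trans hχA)
      ((hV₁.inter hV₂).inter (hGdiff.continuousOn.isOpen_inter_preimage hΩo hV)) ?_ ?_
    · have hjet := integrable_jetSq hφ hφc
      have hjc := continuous_jetSq hφ
      have hint : IntegrableOn (fun y => M * jetSq φ (H y)) (tsupport χ) :=
        ((hjc.comp hH.continuous).const_mul M).continuousOn.integrableOn_compact hχc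
      have hψi := integrable_sq_of_hasCompactSupport (continuous_lap hψ)
        (hasCompactSupport_lap hψc)
      refine hcap'.trans (mul_le_mul_of_nonneg_left ?_ (by norm_num))
      calc ∫ y, (lap ψ y) ^ 2 = ∫ y in tsupport χ, (lap ψ y) ^ 2 := (setIntegral_sq_lap hψs).symm
        _ ≤ ∫ y in tsupport χ, M * jetSq φ (H y) :=
            integral_mono hψi.integrableOn hint (hM φ hφ2)
        _ = M * ∫ y in tsupport χ, jetSq φ (G y) := by
            rw [integral_const_mul]
            congr 1
            exact setIntegral_congr_fun hχc.measurableSet fun y hy => by simp only [hHG y hy]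
        _ ≤ M * (L * ∫ x, jetSq φ x) := by
            gcongr
            exact hL _ hjet (jetSq_nonneg φ)
        _ ≤ M * (L * (K * ε)) := by
            gcongr
            exact (hK φ hφ hφc (hφA.trans hR)).trans (mul_le_mul_of_nonneg_left hφε.le hK0)
    · rintro _ ⟨x, hx, rfl⟩
      have hxy : F x ∈ F '' C := mem_image_of_mem F hx
      have hxΩ := hA0 (hCA hx)
      refine ⟨⟨hCV₁ hxy, hχV₂ (subset_tsupport χ ?_)⟩, hFbij.mapsTo hxΩ, ?_⟩
      · rw [Function.mem_support, hχ1 _ (hCV₁ hxy)]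
        exact one_ne_zero
      · rw [mem_preimage, hInv.1 hxΩ]
        exact hCV hx
    · rintro y ⟨⟨hy1, hy2⟩, -, hyV⟩
      have := hφ1 _ hyV
      simp only [hψdef, H, hχ1 y hy1, hθ1 y hy2, one_smul]
      linarith
  refine le_antisymm (le_of_forall_pos_le_add fun ε hε => ?_) (capD_nonneg _ _)
  have h0 : 0 ≤ M * (L * K) := by positivity
  refine (key (ε / (2 * (M * (L * K)) + 1)) (by positivity)).trans ?_
  rw [zero_add, show 2 * (M * (L * (K * (ε / (2 * (M * (L * K)) + 1))))) =
    (2 * (M * (L * K)) * ε) / (2 * (M * (L * K)) + 1) by ring, div_le_iff₀ (by positivity)]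
  linarith
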